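/- Fix ν ≥ 2, positive integers s,t, a positive integer m, and positive integers m_1,…,m_ν; let f_{i,j} ∈ L¹([-π,π]; ℂ^{s×t}) for i,j = 1,…,ν. Suppose n is divisible by m, set n(m) = n/m, and let the block sizes be exactly n_j = m_j n(m) with m_1+⋯+m_ν = m. Let A_n be the ν×ν block matrix with (i,j) block T_{n_i,n_j}(f_{i,j}), and let Â_n be the ν×ν block matrix whose (j,k) block is the sn_j × tn_k matrix having the matrix I_{m_*} ⊗ T_{n(m)}(f_{j,k}) in its upper-left corner, where m_* = min{m_j, m_k}, and zeros elsewhere. Then for any measurable G: {A_n}_n ∼_σ G if and only if {Â_n}_n ∼_σ G; and if in addition all A_n and Â_n are Hermitian, {A_n}_n ∼_λ G if and only if {Â_n}_n ∼_λ G. -/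

import Mathlib

open MeasureTheory Filter Topology Matrix
open scoped Real

noncomputable section

/-- Sum of `F` over the eigenvalues (with multiplicity) of a square complex matrix,
the eigenvalues being the roots of the characteristic polynomial. -/
def eigSum {ι : Type*} [Fintype ι] [DecidableEq ι] (F : ℂ → ℂ) (A : Matrix ι ι ℂ) : ℂ :=
  (A.charpoly.roots.map F).sum

/-- Sum of `F` over the singular values `σ_1, …, σ_{min(#rows,#cols)}` of a rectangular
complex matrix: the singular values are the square roots of the eigenvalues of `A * Aᴴ`,
discarding the `#rows - min(#rows,#cols)` superfluous zero ones. -/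
def svSum {m n : Type*} [Fintype m] [Fintype n] [DecidableEq m]
    (F : ℝ → ℂ) (A : Matrix m n ℂ) : ℂ :=
  (∑ i, F (Real.sqrt ((Matrix.isHermitian_mul_conjTranspose_self A).eigenvalues i))) -
    ((Fintype.card m - min (Fintype.card m) (Fintype.card n) : ℕ) : ℂ) * F 0

/-- `{A_n}_n ∼_σ f` : the matrix-sequence `A` is distributed as the matrix-valued
symbol `f : Ω → ℂ^{ρ×τ}` in the sense of the singular values (Weyl sense). -/
def DistributedSV {Θ : Type*} [MeasureSpace Θ] (Ω : Set Θ)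
    {ρ τ : Type*} [Fintype ρ] [Fintype τ] [DecidableEq ρ]
    (f : Θ → Matrix ρ τ ℂ)
    {ι κ : ℕ → Type} [∀ n, Fintype (ι n)] [∀ n, Fintype (κ n)] [∀ n, DecidableEq (ι n)]
    (A : ∀ n, Matrix (ι n) (κ n) ℂ) : Prop :=
  ∀ F : ℝ → ℂ, Continuous F → HasCompactSupport F →
    Tendsto
      (fun n => ((min (Fintype.card (ι n)) (Fintype.card (κ n)) : ℕ) : ℂ)⁻¹ * svSum F (A n))
      atTop
      (𝓝 (((volume Ω).toReal : ℂ)⁻¹ *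
        ∫ θ in Ω, ((min (Fintype.card ρ) (Fintype.card τ) : ℕ) : ℂ)⁻¹ * svSum F (f θ)))

/-- `{A_n}_n ∼_λ f` : the matrix-sequence `A` is distributed as the matrix-valued
symbol `f : Ω → ℂ^{ρ×ρ}` in the sense of the eigenvalues (Weyl sense). -/
def DistributedEig {Θ : Type*} [MeasureSpace Θ] (Ω : Set Θ)
    {ρ : Type*} [Fintype ρ] [DecidableEq ρ]
    (f : Θ → Matrix ρ ρ ℂ)
    {ι : ℕ → Type} [∀ n, Fintype (ι n)] [∀ n, DecidableEq (ι n)]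
    (A : ∀ n, Matrix (ι n) (ι n) ℂ) : Prop :=
  ∀ F : ℂ → ℂ, Continuous F → HasCompactSupport F →
    Tendsto (fun n => ((Fintype.card (ι n) : ℕ) : ℂ)⁻¹ * eigSum F (A n)) atTop
      (𝓝 (((volume Ω).toReal : ℂ)⁻¹ *
        ∫ θ in Ω, ((Fintype.card ρ : ℕ) : ℂ)⁻¹ * eigSum F (f θ)))

/-- `{A_n}_n ∼_σ α I` (constant symbol `α I_s`, `α = 0` being the notion of a
zero-distributed matrix-sequence): the limit of the singular value averages is `F(α)`. -/
def DistributedSVConst (α : ℝ)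
    {ι κ : ℕ → Type} [∀ n, Fintype (ι n)] [∀ n, Fintype (κ n)] [∀ n, DecidableEq (ι n)]
    (A : ∀ n, Matrix (ι n) (κ n) ℂ) : Prop :=
  ∀ F : ℝ → ℂ, Continuous F → HasCompactSupport F →
    Tendsto
      (fun n => ((min (Fintype.card (ι n)) (Fintype.card (κ n)) : ℕ) : ℂ)⁻¹ * svSum F (A n))
      atTop (𝓝 (F α))

/-- `{A_n}_n ∼_λ α I` (constant symbol `α I_s`, `α` real): the limit of the eigenvalue
averages is `F(α)`. -/
def DistributedEigConst (α : ℝ)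
    {ι : ℕ → Type} [∀ n, Fintype (ι n)] [∀ n, DecidableEq (ι n)]
    (A : ∀ n, Matrix (ι n) (ι n) ℂ) : Prop :=
  ∀ F : ℂ → ℂ, Continuous F → HasCompactSupport F →
    Tendsto (fun n => ((Fintype.card (ι n) : ℕ) : ℂ)⁻¹ * eigSum F (A n)) atTop
      (𝓝 (F (α : ℂ)))

/-- The `k`-th Fourier coefficient (computed entrywise) of a matrix-valued function on
`[-π, π]`: `f̂_k = (1/2π) ∫_{-π}^{π} f(θ) e^{-ικθ} dθ`. -/
def fCoeff {ρ τ : Type*} (f : ℝ → Matrix ρ τ ℂ) (k : ℤ) : Matrix ρ τ ℂ :=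
  Matrix.of fun a b =>
    ((2 * π : ℝ) : ℂ)⁻¹ *
      ∫ θ in (-π : ℝ)..π, f θ a b * Complex.exp (-(Complex.I * (k : ℂ) * (θ : ℂ)))

/-- The (rectangular) block Toeplitz matrix `T_{n,n'}(f) = [f̂_{i-j}]`, of size
`sn × tn'` when `f` is `s × t` matrix-valued. -/
def blockToeplitz {ρ τ : Type*} (f : ℝ → Matrix ρ τ ℂ) (n n' : ℕ) :
    Matrix (Fin n × ρ) (Fin n' × τ) ℂ :=
  Matrix.of fun p q => fCoeff f (((p.1 : ℕ) : ℤ) - ((q.1 : ℕ) : ℤ)) p.2 q.2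

/-- The `ν × ν` block matrix with `(i,j)` block the rectangular block Toeplitz matrix
`T_{n_i,n_j}(f_{i,j})`; the row index `⟨i,(k,a)⟩` consists of the block row `i`, the
Toeplitz row `k` and the intra-block row `a`. -/
def blockMat (ν s t : ℕ) (f : Fin ν → Fin ν → ℝ → Matrix (Fin s) (Fin t) ℂ)
    (ns : Fin ν → ℕ) :
    Matrix ((i : Fin ν) × (Fin (ns i) × Fin s)) ((j : Fin ν) × (Fin (ns j) × Fin t)) ℂ :=
  Matrix.of fun P Q =>
    fCoeff (f P.1 Q.1) (((P.2.1 : ℕ) : ℤ) - ((Q.2.1 : ℕ) : ℤ)) P.2.2 Q.2.2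

/-- Recasting of the column index of a `ν × ν` block matrix along an equality `s = t`,
realizing it as a square matrix. -/
def sigCast (ν s t : ℕ) (ns : Fin ν → ℕ) (hst : s = t) :
    ((j : Fin ν) × (Fin (ns j) × Fin s)) → ((j : Fin ν) × (Fin (ns j) × Fin t)) :=
  fun Q => ⟨Q.1, (Q.2.1, Fin.cast hst Q.2.2)⟩

/-- The modified block matrix `Â_n` (for block sizes `n_j = m_j N`, `N = n(m) = n/m`):
the `(j,k)` block is the `s m_j N × t m_k N` matrix carrying `I_{m_*} ⊗ T_N(f_{j,k})`
(`m_* = min{m_j, m_k}`) in its upper-left corner and zeros elsewhere. -/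
def blockMatHat (ν s t : ℕ) (f : Fin ν → Fin ν → ℝ → Matrix (Fin s) (Fin t) ℂ)
    (mj : Fin ν → ℕ) (N : ℕ) :
    Matrix ((i : Fin ν) × (Fin (mj i * N) × Fin s))
      ((j : Fin ν) × (Fin (mj j * N) × Fin t)) ℂ :=
  Matrix.of fun P Q =>
    if (P.2.1 : ℕ) < min (mj P.1) (mj Q.1) * N ∧ (Q.2.1 : ℕ) < min (mj P.1) (mj Q.1) * N
        ∧ (P.2.1 : ℕ) / N = (Q.2.1 : ℕ) / N then
      fCoeff (f P.1 Q.1) ((((P.2.1 : ℕ) % N : ℕ) : ℤ) - (((Q.2.1 : ℕ) % N : ℕ) : ℤ))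
        P.2.2 Q.2.2
    else 0

section HelperLemmas

open scoped Matrix.Norms.L2Operator

/-- Dual formulation of the trace-norm bound. -/
def TN {α β : Type*} [Fintype α] [Fintype β] [DecidableEq α] [DecidableEq β]
    (X : Matrix α β ℂ) (δ : ℝ) : Prop :=
  ∀ C : Matrix β α ℂ, ‖(C * X).trace‖ ≤ δ * ‖C‖

section TNlemmas

variable {α β γ κ : Type*} [Fintype α] [Fintype β] [DecidableEq α] [DecidableEq β]
  [Fintype γ] [Fintype κ] [DecidableEq γ] [DecidableEq κ]

lemma TN.mono {X : Matrix α β ℂ} {δ δ' : ℝ} (h : TN X δ) (hd : δ ≤ δ') : TN X δ' :=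
  fun C => (h C).trans (mul_le_mul_of_nonneg_right hd (norm_nonneg _))

lemma TN.add {X Y : Matrix α β ℂ} {δ δ' : ℝ} (h : TN X δ) (h' : TN Y δ') :
    TN (X + Y) (δ + δ') := by
  intro C
  rw [Matrix.mul_add, Matrix.trace_add, add_mul]
  exact (norm_add_le _ _).trans (add_le_add (h C) (h' C))

lemma TN.zero : TN (0 : Matrix α β ℂ) 0 := by
  intro C; simp

lemma TN.sum {T : Type*} (S : Finset T) {X : T → Matrix α β ℂ} {δ : T → ℝ}
    (h : ∀ τ ∈ S, TN (X τ) (δ τ)) : TN (∑ τ ∈ S, X τ) (∑ τ ∈ S, δ τ) := by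
  classical
  induction S using Finset.induction_on with
  | empty => simpa using TN.zero
  | insert a S ha ih =>
    rw [Finset.sum_insert ha, Finset.sum_insert ha]
    exact (h a (by simp)).add (ih fun τ hτ => h τ (by simp [hτ]))

lemma TN.smul {X : Matrix α β ℂ} {δ : ℝ} (h : TN X δ) (c : ℂ) : TN (c • X) (‖c‖ * δ) := by
  intro C
  rw [Matrix.mul_smul, Matrix.trace_smul, norm_smul, mul_assoc]
  exact mul_le_mul_of_nonneg_left (h C) (norm_nonneg _)

lemma TN.neg {X : Matrix α β ℂ} {δ : ℝ} (h : TN X δ) : TN (-X) δ := by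
  simpa using h.smul (-1)

lemma TN.conjTranspose {X : Matrix α β ℂ} {δ : ℝ} (h : TN X δ) : TN Xᴴ δ := by
  intro C
  have := h Cᴴ
  rw [Matrix.l2_opNorm_conjTranspose, Matrix.trace_mul_comm, ← Matrix.conjTranspose_conjTranspose X,
    ← Matrix.conjTranspose_mul, Matrix.trace_conjTranspose, norm_star] at this
  exact this

lemma TN.mul_mul {X : Matrix α β ℂ} {δ : ℝ} (hδ : 0 ≤ δ) (h : TN X δ) (A : Matrix γ α ℂ)
    (B : Matrix β κ ℂ) (a b : ℝ) (ha : ‖A‖ ≤ a) (hb : ‖B‖ ≤ b) :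
    TN (A * X * B) (a * b * δ) := by
  intro C
  have h1 : (C * (A * X * B)).trace = ((B * C * A) * X).trace := by
    rw [← Matrix.mul_assoc, Matrix.trace_mul_comm]
    simp only [Matrix.mul_assoc]
  have h2 : ‖B * C * A‖ ≤ b * ‖C‖ * a :=
    (Matrix.l2_opNorm_mul _ _).trans (mul_le_mul ((Matrix.l2_opNorm_mul _ _).trans
      (mul_le_mul_of_nonneg_right hb (norm_nonneg _))) ha (norm_nonneg _)
      (mul_nonneg ((norm_nonneg _).trans hb) (norm_nonneg _)))
  rw [h1]
  refine (h _).trans ((mul_le_mul_of_nonneg_left h2 hδ).trans (le_of_eq (by ring)))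

/-- bilinear bound -/
lemma bilin_bound (C : Matrix β α ℂ) (u : β → ℂ) (v : α → ℂ) (hu : ∀ i, ‖u i‖ ≤ 1)
    (hv : ∀ i, ‖v i‖ ≤ 1) :
    ‖∑ q, ∑ p, u q * C q p * v p‖ ≤ √(Fintype.card β) * √(Fintype.card α) * ‖C‖ := by
  have e : ∑ q, ∑ p, u q * C q p * v p =
      inner ℂ (WithLp.toLp 2 (star u)) (WithLp.toLp 2 (C *ᵥ v)) := by
    simp [PiLp.inner_apply, Matrix.mulVec, dotProduct, Finset.mul_sum, mul_assoc, mul_comm,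
      mul_left_comm]
  have key : ∀ {κ : Type _} [Fintype κ] (w : κ → ℂ), (∀ i, ‖w i‖ ≤ 1) →
      ‖(WithLp.toLp 2 w : EuclideanSpace ℂ κ)‖ ≤ √(Fintype.card κ) := by
    intro κ _ w hw
    rw [EuclideanSpace.norm_eq]
    apply Real.sqrt_le_sqrt
    calc _ ≤ ∑ i : κ, (1 : ℝ) := Finset.sum_le_sum fun i _ => by
            have := hw i
            have h0 := norm_nonneg (w i)
            simp only
            nlinarith
      _ = _ := by simp
  have key2 : ∀ {κ : Type _} [Fintype κ] (w : κ → ℂ), (∀ i, ‖w i‖ ≤ 1) →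
      ‖(WithLp.toLp 2 w : EuclideanSpace ℂ κ)‖ ≤ √(Fintype.card κ) := by
    intro κ _ w hw
    rw [EuclideanSpace.norm_eq]
    apply Real.sqrt_le_sqrt
    calc _ ≤ ∑ i : κ, (1 : ℝ) := Finset.sum_le_sum fun i _ => by
            have := hw i
            have h0 := norm_nonneg (w i)
            simp only
            nlinarith
      _ = _ := by simp
  rw [e]
  refine (norm_inner_le_norm _ _).trans ?_
  have h1 : ‖(WithLp.toLp 2 (C *ᵥ v) : EuclideanSpace ℂ β)‖ ≤ ‖C‖ * √(Fintype.card α) :=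
    (Matrix.l2_opNorm_mulVec C (WithLp.toLp 2 v)).trans
      (mul_le_mul_of_nonneg_left (key2 v hv) (norm_nonneg _))
  have h2 := key (star u) (by simpa using hu)
  calc _ ≤ √(Fintype.card β) * (‖C‖ * √(Fintype.card α)) :=
        mul_le_mul h2 h1 (norm_nonneg _) (Real.sqrt_nonneg _)
    _ = _ := by ring

lemma entry_le_opNorm (C : Matrix β α ℂ) (i : β) (j : α) : ‖C i j‖ ≤ ‖C‖ := by
  have h1 := Matrix.l2_opNorm_mulVec C (EuclideanSpace.single j (1 : ℂ))
  have h2 := (PiLp.norm_apply_le (WithLp.toLp 2 (C *ᵥ (EuclideanSpace.single j (1 : ℂ)).ofLp) :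
    EuclideanSpace ℂ β) i)
  have h3 := h2.trans h1
  simpa [Matrix.mulVec_single] using h3

lemma TN.of_norm_le {X : Matrix α α ℂ} {c : ℝ} (h : ‖X‖ ≤ c) : TN X (Fintype.card α * c) := by
  intro C
  calc ‖(C * X).trace‖ ≤ ∑ i, ‖(C * X) i i‖ := norm_sum_le _ _
    _ ≤ ∑ i : α, ‖C‖ * c := Finset.sum_le_sum fun i _ => (entry_le_opNorm _ _ _).trans
        ((Matrix.l2_opNorm_mul _ _).trans (mul_le_mul_of_nonneg_left h (norm_nonneg _)))
    _ = _ := by simp; ring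

lemma TN.of_entries (X : Matrix α β ℂ) : TN X (∑ p, ∑ q, ‖X p q‖) := by
  intro C
  rw [Matrix.trace_mul_comm]
  calc ‖(X * C).trace‖ ≤ ∑ p, ‖∑ q, X p q * C q p‖ := norm_sum_le _ _
    _ ≤ ∑ p, ∑ q, ‖X p q‖ * ‖C‖ := Finset.sum_le_sum fun p _ => (norm_sum_le _ _).trans
        (Finset.sum_le_sum fun q _ => by
          rw [norm_mul]; exact mul_le_mul_of_nonneg_left (entry_le_opNorm _ _ _) (norm_nonneg _))
    _ = _ := by simp only [Finset.sum_mul]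

end TNlemmas

section FM

variable {α : Type*} [Fintype α] [DecidableEq α] {A : Matrix α α ℂ}

/-- functional calculus for Hermitian matrices -/
def fm (hA : A.IsHermitian) (F : ℝ → ℂ) : Matrix α α ℂ :=
  (hA.eigenvectorUnitary : Matrix α α ℂ) * diagonal (fun i => F (hA.eigenvalues i)) *
    star (hA.eigenvectorUnitary : Matrix α α ℂ)

lemma fm_add (hA : A.IsHermitian) (F G : ℝ → ℂ) : fm hA (fun x => F x + G x) = fm hA F + fm hA G := by
  simp only [fm]
  rw [← Matrix.add_mul, ← Matrix.mul_add, Matrix.diagonal_add]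

lemma fm_mul (hA : A.IsHermitian) (F G : ℝ → ℂ) : fm hA (fun x => F x * G x) = fm hA F * fm hA G := by
  have h : star (hA.eigenvectorUnitary : Matrix α α ℂ) * (hA.eigenvectorUnitary : Matrix α α ℂ) = 1 :=
    Unitary.coe_star_mul_self _
  simp only [fm]
  rw [← Matrix.diagonal_mul_diagonal]
  simp only [Matrix.mul_assoc]
  rw [← Matrix.mul_assoc (star _) (_ : Matrix α α ℂ) (_ * _), h, Matrix.one_mul]

lemma fm_const (hA : A.IsHermitian) (c : ℂ) : fm hA (fun _ => c) = c • 1 := by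
  have h : (hA.eigenvectorUnitary : Matrix α α ℂ) * star (hA.eigenvectorUnitary : Matrix α α ℂ) = 1 :=
    Unitary.coe_mul_star_self _
  simp only [fm]
  rw [← Matrix.smul_one_eq_diagonal]
  simp [h]

lemma fm_id (hA : A.IsHermitian) : fm hA (fun x => (x : ℂ)) = A := by
  conv_rhs => rw [hA.spectral_theorem]
  rfl

lemma fm_star (hA : A.IsHermitian) (F : ℝ → ℂ) : fm hA (fun x => star (F x)) = (fm hA F)ᴴ := by
  simp only [fm, Matrix.conjTranspose_mul, Matrix.star_eq_conjTranspose,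
    Matrix.conjTranspose_conjTranspose, Matrix.diagonal_conjTranspose, Matrix.mul_assoc]
  rfl

lemma fm_trace (hA : A.IsHermitian) (F : ℝ → ℂ) :
    (fm hA F).trace = ∑ i, F (hA.eigenvalues i) := by
  have h : star (hA.eigenvectorUnitary : Matrix α α ℂ) * (hA.eigenvectorUnitary : Matrix α α ℂ) = 1 :=
    Unitary.coe_star_mul_self _
  rw [fm, Matrix.trace_mul_comm, ← Matrix.mul_assoc, h, Matrix.one_mul, Matrix.trace_diagonal]

lemma fm_norm (hA : A.IsHermitian) (F : ℝ → ℂ) (c : ℝ) (hc : 0 ≤ c) (h : ∀ x, ‖F x‖ ≤ c) :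
    ‖fm hA F‖ ≤ c := by
  have hU : ∀ U ∈ unitary (Matrix α α ℂ), ‖U‖ ≤ 1 := by
    intro U hU
    rcases isEmpty_or_nonempty α with h0 | h0
    · rw [Subsingleton.elim U 0]; simp
    · exact (CStarRing.norm_of_mem_unitary hU).le
  have h1 := hU _ hA.eigenvectorUnitary.2
  have h2 := hU _ (Unitary.star_mem hA.eigenvectorUnitary.2)
  have h3 : ‖(diagonal (fun i => F (hA.eigenvalues i)) : Matrix α α ℂ)‖ ≤ c := by
    rw [Matrix.l2_opNorm_diagonal]
    exact (pi_norm_le_iff_of_nonneg hc).2 fun i => h _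
  calc _ ≤ 1 * c * 1 := (Matrix.l2_opNorm_mul _ _).trans (mul_le_mul ((Matrix.l2_opNorm_mul _ _).trans
          (mul_le_mul h1 h3 (norm_nonneg _) zero_le_one)) h2 (norm_nonneg _) (by positivity))
    _ = c := by ring

/-- the resolvent function -/
def rz (x : ℝ) : ℂ := ((x : ℂ) + Complex.I)⁻¹

lemma rz_ne (x : ℝ) : (x : ℂ) + Complex.I ≠ 0 := by
  intro h
  have := congrArg Complex.im h
  simp at this

lemma rz_norm (x : ℝ) : ‖rz x‖ ≤ 1 := by
  rw [rz, norm_inv]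
  apply inv_le_one_of_one_le₀
  have := Complex.abs_im_le_norm ((x : ℂ) + Complex.I)
  simpa using this

lemma fm_rz_mul (hA : A.IsHermitian) : fm hA rz * (A + Complex.I • 1) = 1 := by
  have : A + Complex.I • 1 = fm hA (fun x => (x : ℂ) + Complex.I) := by
    rw [fm_add, fm_id, fm_const]
  rw [this, ← fm_mul]
  have h : (fun x : ℝ => rz x * ((x : ℂ) + Complex.I)) = fun _ => (1 : ℂ) := by
    funext x; exact inv_mul_cancel₀ (rz_ne x)
  rw [h, fm_const, one_smul]

lemma mul_fm_rz (hA : A.IsHermitian) : (A + Complex.I • 1) * fm hA rz = 1 := by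
  have : A + Complex.I • 1 = fm hA (fun x => (x : ℂ) + Complex.I) := by
    rw [fm_add, fm_id, fm_const]
  rw [this, ← fm_mul]
  have h : (fun x : ℝ => ((x : ℂ) + Complex.I) * rz x) = fun _ => (1 : ℂ) := by
    funext x; exact mul_inv_cancel₀ (rz_ne x)
  rw [h, fm_const, one_smul]

lemma resolvent_id {B : Matrix α α ℂ} (hA : A.IsHermitian) (hB : B.IsHermitian) :
    fm hA rz - fm hB rz = fm hA rz * (B - A) * fm hB rz := by
  have : B - A = (B + Complex.I • 1) - (A + Complex.I • 1) := by abel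
  rw [this, Matrix.mul_sub, Matrix.sub_mul, fm_rz_mul, Matrix.mul_assoc, mul_fm_rz]
  simp

lemma fm_rz_norm (hA : A.IsHermitian) : ‖fm hA rz‖ ≤ 1 := fm_norm _ _ 1 zero_le_one rz_norm

lemma resolvent_TN_herm {B : Matrix α α ℂ} (hA : A.IsHermitian) (hB : B.IsHermitian) {δ : ℝ}
    (hδ : 0 ≤ δ) (h : TN (A - B) δ) : TN (fm hA rz - fm hB rz) δ := by
  rw [resolvent_id]
  have h' : TN (B - A) δ := by simpa using h.neg
  simpa using h'.mul_mul hδ _ _ 1 1 (fm_rz_norm hA) (fm_rz_norm hB)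

lemma rz_mul_norm {β : Type*} [Fintype β] [DecidableEq β] (A : Matrix α β ℂ) :
    ‖fm (isHermitian_mul_conjTranspose_self A) rz * A‖ ≤ 1 := by
  set h := isHermitian_mul_conjTranspose_self A
  have e : (fm h rz * A) * (fm h rz * A)ᴴ = fm h (fun x => rz x * (x : ℂ) * star (rz x)) := by
    rw [fm_mul h (fun x => rz x * (x : ℂ)) (fun x => star (rz x)), fm_mul, fm_id, fm_star,
      Matrix.conjTranspose_mul]
    simp only [Matrix.mul_assoc]
  have h1 : ‖(fm h rz * A)ᴴᴴ * (fm h rz * A)ᴴ‖ ≤ 1 := by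
    rw [Matrix.conjTranspose_conjTranspose, e]
    apply fm_norm _ _ 1 zero_le_one
    intro x
    rw [norm_mul, norm_mul, norm_star]
    have h2 : ‖rz x‖ * ‖(x : ℂ)‖ ≤ 1 := by
      rw [rz, norm_inv, inv_mul_le_iff₀ (norm_pos_iff.2 (rz_ne x)), mul_one]
      have := Complex.abs_re_le_norm ((x : ℂ) + Complex.I)
      simpa using this
    calc _ ≤ 1 * (1:ℝ) := mul_le_mul h2 (rz_norm x) (norm_nonneg _) zero_le_one
      _ = 1 := one_mul 1
  rw [Matrix.l2_opNorm_conjTranspose_mul_self, Matrix.l2_opNorm_conjTranspose] at h1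
  nlinarith [norm_nonneg (fm h rz * A)]

lemma rz_mul_norm' {β : Type*} [Fintype β] [DecidableEq β] (A : Matrix α β ℂ) :
    ‖Aᴴ * fm (isHermitian_mul_conjTranspose_self A) rz‖ ≤ 1 := by
  set h := isHermitian_mul_conjTranspose_self A
  have e : (Aᴴ * fm h rz)ᴴ * (Aᴴ * fm h rz) = fm h (fun x => star (rz x) * (x : ℂ) * rz x) := by
    rw [fm_mul h (fun x => star (rz x) * (x : ℂ)) rz, fm_mul h (fun x => star (rz x)), fm_id, fm_star,
      Matrix.conjTranspose_mul, Matrix.conjTranspose_conjTranspose]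
    simp only [Matrix.mul_assoc]
  have h1 : ‖(Aᴴ * fm h rz)ᴴ * (Aᴴ * fm h rz)‖ ≤ 1 := by
    rw [e]
    apply fm_norm _ _ 1 zero_le_one
    intro x
    rw [norm_mul, norm_mul, norm_star]
    have h2 : ‖rz x‖ * ‖(x : ℂ)‖ ≤ 1 := by
      rw [rz, norm_inv, inv_mul_le_iff₀ (norm_pos_iff.2 (rz_ne x)), mul_one]
      have := Complex.abs_re_le_norm ((x : ℂ) + Complex.I)
      simpa using this
    calc _ ≤ 1 * (1:ℝ) := mul_le_mul h2 (rz_norm x) (norm_nonneg _) zero_le_one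
      _ = 1 := one_mul 1
  rw [Matrix.l2_opNorm_conjTranspose_mul_self] at h1
  nlinarith [norm_nonneg (Aᴴ * fm h rz)]

lemma resolvent_TN_sv {β : Type*} [Fintype β] [DecidableEq β] (A B : Matrix α β ℂ) {δ : ℝ}
    (hδ : 0 ≤ δ) (h : TN (A - B) δ) :
    TN (fm (isHermitian_mul_conjTranspose_self A) rz - fm (isHermitian_mul_conjTranspose_self B) rz)
      (2 * δ) := by
  rw [resolvent_id]
  have h' : TN (B - A) δ := by simpa using h.neg
  set hA := isHermitian_mul_conjTranspose_self A
  set hB := isHermitian_mul_conjTranspose_self B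
  have e : fm hA rz * (B * Bᴴ - A * Aᴴ) * fm hB rz =
      (fm hA rz * A) * (B - A)ᴴ * fm hB rz + fm hA rz * (B - A) * (Bᴴ * fm hB rz) := by
    simp only [Matrix.conjTranspose_sub, Matrix.mul_sub, Matrix.sub_mul, Matrix.mul_assoc]
    abel
  rw [e, two_mul]
  apply TN.add
  · simpa using h'.conjTranspose.mul_mul hδ _ _ 1 1 (rz_mul_norm A) (fm_rz_norm hB)
  · simpa using h'.mul_mul hδ _ _ 1 1 (fm_rz_norm hA) (rz_mul_norm' B)

end FM

section SeqPart

variable {ι : ℕ → Type} [∀ n, Fintype (ι n)] [∀ n, DecidableEq (ι n)]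
  {X Y : ∀ n, Matrix (ι n) (ι n) ℂ}

/-- functional calculus asymptotically equal in normalized trace norm -/
def Good (hX : ∀ n, (X n).IsHermitian) (hY : ∀ n, (Y n).IsHermitian) (F : ℝ → ℂ) : Prop :=
  ∀ ε : ℝ, 0 < ε → ∀ᶠ n : ℕ in atTop, TN (fm (hX n) F - fm (hY n) F) (ε * n)

variable (hX : ∀ n, (X n).IsHermitian) (hY : ∀ n, (Y n).IsHermitian)

lemma Good.add {F G : ℝ → ℂ} (hF : Good hX hY F) (hG : Good hX hY G) :
    Good hX hY (fun x => F x + G x) := by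
  intro ε hε
  filter_upwards [hF (ε/2) (by positivity), hG (ε/2) (by positivity)] with n h1 h2
  have := h1.add h2
  rw [fm_add, fm_add]
  convert this using 1
  · abel
  · ring

lemma Good.const (c : ℂ) : Good hX hY (fun _ => c) := by
  intro ε hε
  filter_upwards with n
  rw [fm_const, fm_const, sub_self]
  exact TN.zero.mono (by positivity)

lemma Good.star {F : ℝ → ℂ} (hF : Good hX hY F) : Good hX hY (fun x => star (F x)) := by
  intro ε hε
  filter_upwards [hF ε hε] with n h1
  rw [fm_star, fm_star, ← Matrix.conjTranspose_sub]
  exact h1.conjTranspose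

lemma Good.mul {F G : ℝ → ℂ} {a b : ℝ} (hF : Good hX hY F) (hG : Good hX hY G)
    (ha : ∀ x, ‖F x‖ ≤ a) (hb : ∀ x, ‖G x‖ ≤ b) :
    Good hX hY (fun x => F x * G x) := by
  intro ε hε
  have ha0 : 0 ≤ a := (norm_nonneg _).trans (ha 0)
  have hb0 : 0 ≤ b := (norm_nonneg _).trans (hb 0)
  filter_upwards [hF (ε/(2*(b+1))) (by positivity), hG (ε/(2*(a+1))) (by positivity)] with n h1 h2
  have e : fm (hX n) (fun x => F x * G x) - fm (hY n) (fun x => F x * G x) =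
      fm (hX n) F * (fm (hX n) G - fm (hY n) G) * 1 +
      1 * (fm (hX n) F - fm (hY n) F) * fm (hY n) G := by
    rw [fm_mul, fm_mul]
    simp only [Matrix.mul_sub, Matrix.sub_mul, Matrix.mul_one, Matrix.one_mul]
    abel
  have hone : ‖(1 : Matrix (ι n) (ι n) ℂ)‖ ≤ 1 := by
    have := fm_norm (hX n) (fun _ => 1) 1 zero_le_one (by simp)
    rwa [fm_const, one_smul] at this
  rw [e]
  refine ((h2.mul_mul (by positivity) _ _ (a+1) 1 ((fm_norm _ _ a ha0 ha).trans (by linarith)) hone).add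
    (h1.mul_mul (by positivity) _ _ 1 (b+1) hone ((fm_norm _ _ b hb0 hb).trans (by linarith)))).mono
    (le_of_eq ?_)
  field_simp
  ring

lemma Good.limit {c : ℝ} (hc : 0 ≤ c) (hcard : ∀ n, (Fintype.card (ι n) : ℝ) ≤ c * n)
    {F : ℝ → ℂ} (h : ∀ ε : ℝ, 0 < ε → ∃ G : ℝ → ℂ, Good hX hY G ∧ ∀ x, ‖F x - G x‖ ≤ ε) :
    Good hX hY F := by
  intro ε hε
  obtain ⟨G, hG, hFG⟩ := h (ε / (4 * (c + 1))) (by positivity)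
  filter_upwards [hG (ε/2) (by positivity)] with n h1
  have key : ∀ {Z : Matrix (ι n) (ι n) ℂ} (hZ : Z.IsHermitian),
      TN (fm hZ (fun x => F x - G x)) (ε / 4 * n) := by
    intro Z hZ
    refine (TN.of_norm_le (fm_norm hZ _ _ (by positivity) hFG)).mono ?_
    calc _ ≤ (c + 1) * n * (ε / (4 * (c + 1))) := by
          apply mul_le_mul_of_nonneg_right _ (by positivity)
          refine (hcard n).trans (mul_le_mul_of_nonneg_right (by linarith) (by positivity))
      _ = _ := by field_simp
  have dec : ∀ {Z : Matrix (ι n) (ι n) ℂ} (hZ : Z.IsHermitian),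
      fm hZ F = fm hZ (fun x => F x - G x) + fm hZ G := by
    intro Z hZ
    rw [← fm_add]; simp
  rw [dec (hX n), dec (hY n)]
  refine TN.mono (δ := ε / 4 * n + ε / 4 * n + ε / 2 * n) ?_ (le_of_eq (by ring))
  convert ((key (hX n)).add (key (hY n)).neg).add h1 using 1
  abel

lemma rz_tendsto : Tendsto rz (coclosedCompact ℝ) (𝓝 0) := by
  rw [coclosedCompact_eq_cocompact]
  apply tendsto_inv₀_cobounded.comp
  rw [← tendsto_norm_atTop_iff_cobounded]
  refine tendsto_atTop_mono (f := fun x : ℝ => ‖x‖) (fun x => ?_) (tendsto_norm_cocompact_atTop)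
  have := Complex.abs_re_le_norm ((x : ℂ) + Complex.I)
  simpa using this

lemma rz_cont : Continuous rz := by
  unfold rz
  exact Continuous.inv₀ (by fun_prop) rz_ne

/-- resolvent as a continuous function on the one-point compactification -/
def rzC : C(OnePoint ℝ, ℂ) := OnePoint.continuousMapMk ⟨rz, rz_cont⟩ 0 rz_tendsto

lemma good_all (hr : Good hX hY rz)
    {c : ℝ} (hc : 0 ≤ c) (hcard : ∀ n, (Fintype.card (ι n) : ℝ) ≤ c * n) (H : C(OnePoint ℝ, ℂ)) :
    Good hX hY (fun x => H (x : OnePoint ℝ)) := by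
  let S := StarAlgebra.adjoin ℂ {rzC}
  have hS : ∀ G ∈ S, Good hX hY (fun x => G (x : OnePoint ℝ)) := by
    intro G hG
    induction hG using StarAlgebra.adjoin_induction with
    | mem x hx =>
      rw [Set.mem_singleton_iff] at hx
      subst hx
      exact hr
    | algebraMap r => exact Good.const hX hY r
    | add x y _ _ h1 h2 => exact Good.add hX hY h1 h2
    | mul x y _ _ h1 h2 =>
      exact Good.mul hX hY (a := ‖x‖) (b := ‖y‖) h1 h2 (fun z => x.norm_coe_le_norm _)
        (fun z => y.norm_coe_le_norm _)
    | star x _ h1 => exact Good.star hX hY h1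
  have htop : S.topologicalClosure = ⊤ := by
    apply ContinuousMap.starSubalgebra_topologicalClosure_eq_top_of_separatesPoints
    intro x y hxy
    refine ⟨rzC, ⟨rzC, StarAlgebra.self_mem_adjoin_singleton ℂ rzC, rfl⟩, ?_⟩
    have hne : ∀ x : ℝ, rz x ≠ 0 := fun x => inv_ne_zero (rz_ne x)
    induction x using OnePoint.rec with
    | infty =>
      induction y using OnePoint.rec with
      | infty => exact absurd rfl hxy
      | coe y => exact (hne y).symm
    | coe x =>
      induction y using OnePoint.rec with
      | infty => exact hne x
      | coe y =>
        intro h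
        have h' : rz x = rz y := h
        have := inv_injective h'
        apply hxy
        congr 1
        simpa using this
  have hH : H ∈ S.topologicalClosure := by rw [htop]; trivial
  apply Good.limit hX hY hc hcard
  intro ε hε
  have hH' : H ∈ closure (S : Set C(OnePoint ℝ, ℂ)) := hH
  obtain ⟨G, hG, hd⟩ := Metric.mem_closure_iff.1 hH' ε hε
  refine ⟨_, hS G hG, fun x => ?_⟩
  rw [dist_eq_norm] at hd
  exact ((H - G).norm_coe_le_norm x).trans hd.le

lemma good_compact (hr : Good hX hY rz)
    {c : ℝ} (hc : 0 ≤ c) (hcard : ∀ n, (Fintype.card (ι n) : ℝ) ≤ c * n) {F : ℝ → ℂ}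
    (hF : Continuous F) (hF' : HasCompactSupport F) (ε : ℝ) (hε : 0 < ε) :
    ∀ᶠ n : ℕ in atTop, ‖∑ i, F ((hX n).eigenvalues i) - ∑ i, F ((hY n).eigenvalues i)‖ ≤ ε * n := by
  have ht : Tendsto F (coclosedCompact ℝ) (𝓝 0) := by
    rw [coclosedCompact_eq_cocompact]
    exact hF'.is_zero_at_infty
  have := good_all hX hY hr hc hcard (OnePoint.continuousMapMk ⟨F, hF⟩ 0 ht) ε hε
  filter_upwards [this] with n hn
  have h1 := hn 1
  have hone : ‖(1 : Matrix (ι n) (ι n) ℂ)‖ ≤ 1 := by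
    have := fm_norm (hX n) (fun _ => 1) 1 zero_le_one (by simp)
    rwa [fm_const, one_smul] at this
  rw [Matrix.one_mul, Matrix.trace_sub, fm_trace, fm_trace] at h1
  refine h1.trans ?_
  calc ε * n * _ ≤ ε * n * 1 := mul_le_mul_of_nonneg_left hone (by positivity)
    _ = _ := mul_one _

end SeqPart

section ToepPart

variable {T : ℝ} [hT : Fact (0 < T)]

/-- elementary Toeplitz-like piece -/
def pieceMat {α β : Type*} (x : α → ℕ) (y : β → ℕ) (a : α → ℂ) (b : β → ℂ)
    (ψ : AddCircle T → ℂ) : Matrix α β ℂ :=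
  Matrix.of fun P Q => a P * b Q * fourierCoeff ψ ((x P : ℤ) - (y Q : ℤ))

/-- the off-block-diagonal part of a Toeplitz-like piece -/
def offMat {α β : Type*} (N : ℕ) (x : α → ℕ) (y : β → ℕ) (a : α → ℂ) (b : β → ℂ)
    (ψ : AddCircle T → ℂ) : Matrix α β ℂ :=
  Matrix.of fun P Q => if x P / N = y Q / N then 0 else
    a P * b Q * fourierCoeff ψ ((x P : ℤ) - (y Q : ℤ))

section fin
variable {α β : Type*} [Fintype α] [Fintype β] [DecidableEq α] [DecidableEq β]

lemma piece_TN (x : α → ℕ) (y : β → ℕ) (a : α → ℂ) (b : β → ℂ) (ha : ∀ P, ‖a P‖ ≤ 1)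
    (hb : ∀ Q, ‖b Q‖ ≤ 1) {ψ : AddCircle T → ℂ} (hψ : Integrable ψ AddCircle.haarAddCircle) :
    TN (pieceMat x y a b ψ) ((∫ t, ‖ψ t‖ ∂AddCircle.haarAddCircle) *
      (√(Fintype.card β) * √(Fintype.card α))) := by
  intro C
  have hn : ∀ (k : ℤ) (t : AddCircle T), ‖fourier k t‖ ≤ 1 := by
    intro k t
    rw [fourier_apply, Circle.norm_coe]
  have e : (C * pieceMat x y a b ψ).trace =
      ∫ t, (∑ q, ∑ p, (b q * fourier (y q : ℤ) t) * C q p * (a p * fourier (-(x p : ℤ)) t)) * ψ t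
        ∂AddCircle.haarAddCircle := by
    simp only [Matrix.trace, Matrix.diag, Matrix.mul_apply, pieceMat, Matrix.of_apply, fourierCoeff,
      Finset.sum_mul]
    rw [integral_finsetSum]
    · refine Finset.sum_congr rfl fun q _ => ?_
      rw [integral_finsetSum]
      · refine Finset.sum_congr rfl fun p _ => ?_
        rw [← integral_const_mul, ← integral_const_mul]
        congr 1
        funext t
        have : -((x p : ℤ) - (y q : ℤ)) = (y q : ℤ) + (-(x p : ℤ)) := by ring
        rw [this, fourier_add, smul_eq_mul]
        ring
      · intro p _
        have := (((hψ.fourier_smul (-(x p : ℤ))).fourier_smul (y q : ℤ)).const_mul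
          (b q * C q p * a p))
        refine this.congr (Filter.Eventually.of_forall fun t => ?_)
        simp only [smul_eq_mul]
        ring
    · intro q _
      apply integrable_finset_sum
      intro p _
      have := (((hψ.fourier_smul (-(x p : ℤ))).fourier_smul (y q : ℤ)).const_mul
          (b q * C q p * a p))
      refine this.congr (Filter.Eventually.of_forall fun t => ?_)
      simp only [smul_eq_mul]
      ring
  rw [e]
  calc _ ≤ ∫ t, (√(Fintype.card β) * √(Fintype.card α) * ‖C‖) * ‖ψ t‖ ∂AddCircle.haarAddCircle := by
        apply norm_integral_le_of_norm_le (hψ.norm.const_mul _)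
        refine Filter.Eventually.of_forall fun t => ?_
        rw [norm_mul]
        apply mul_le_mul_of_nonneg_right _ (norm_nonneg _)
        apply bilin_bound
        · intro q
          rw [norm_mul]
          exact mul_le_one₀ (hb q) (norm_nonneg _) (hn _ _)
        · intro p
          rw [norm_mul]
          exact mul_le_one₀ (ha p) (norm_nonneg _) (hn _ _)
    _ = _ := by rw [integral_const_mul]; ring

lemma off_TN (N m : ℕ) (x : α → ℕ) (y : β → ℕ) (a : α → ℂ) (b : β → ℂ) (ha : ∀ P, ‖a P‖ ≤ 1)
    (hb : ∀ Q, ‖b Q‖ ≤ 1) (hx : ∀ P, x P / N < m)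
    {ψ : AddCircle T → ℂ} (hψ : Integrable ψ AddCircle.haarAddCircle) :
    TN (offMat N x y a b ψ) ((m + 1) * ((∫ t, ‖ψ t‖ ∂AddCircle.haarAddCircle) *
      (√(Fintype.card β) * √(Fintype.card α)))) := by
  have e : offMat N x y a b ψ = pieceMat x y a b ψ +
      -∑ l ∈ Finset.range m, pieceMat x y (fun P => if x P / N = l then a P else 0)
        (fun Q => if y Q / N = l then b Q else 0) ψ := by
    ext P Q
    simp only [offMat, pieceMat, Matrix.add_apply, Matrix.neg_apply, Matrix.sum_apply, Matrix.of_apply]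
    rw [Finset.sum_eq_single (x P / N)]
    · by_cases h : x P / N = y Q / N
      · simp [h]
      · simp [h, Ne.symm h]
    · intro l _ hl
      simp [Ne.symm hl]
    · intro h
      exact absurd (Finset.mem_range.2 (hx P)) h
  rw [e]
  refine ((piece_TN x y a b ha hb hψ).add (TN.sum (Finset.range m) (fun l _ =>
    piece_TN x y _ _ ?_ ?_ hψ)).neg).mono (le_of_eq ?_)
  · intro P; split_ifs
    · exact ha P
    · simp
  · intro P; split_ifs
    · exact hb P
    · simp
  · rw [Finset.sum_const, Finset.card_range, nsmul_eq_mul]; ring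

lemma off_mono (N m : ℕ) (hN : 0 < N) (x : α → ℕ) (y : β → ℕ) (a : α → ℂ) (b : β → ℂ)
    (ha : ∀ P, ‖a P‖ ≤ 1)
    (hb : ∀ Q, ‖b Q‖ ≤ 1) (hx : ∀ P, x P / N < m) (hy : ∀ Q, y Q / N < m)
    (hxi : Set.InjOn x {P | a P ≠ 0}) (hyi : Set.InjOn y {Q | b Q ≠ 0}) (k : ℤ) :
    TN (offMat N x y a b (fourier k : AddCircle T → ℂ)) ((k.natAbs * m : ℕ) : ℝ) := by
  refine (TN.of_entries _).mono ?_
  rw [← Finset.sum_product']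
  let S : Finset (α × β) := {R | x R.1 / N ≠ y R.2 / N ∧ a R.1 ≠ 0 ∧ b R.2 ≠ 0 ∧
    (x R.1 : ℤ) - y R.2 = k}
  have hle : ∀ R : α × β, ‖offMat N x y a b (fourier k : AddCircle T → ℂ) R.1 R.2‖ ≤
      if R ∈ S then 1 else 0 := by
    intro R
    simp only [offMat, Matrix.of_apply, fourierCoeff_fourier]
    split_ifs with h1 h2 h2
    · simp
    · simp
    · rw [norm_mul, norm_mul]
      refine mul_le_one₀ (mul_le_one₀ (ha _) (norm_nonneg _) (hb _)) (norm_nonneg _) ?_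
      rw [Pi.single_apply]; split_ifs <;> simp
    · by_cases h3 : a R.1 = 0
      · simp [h3]
      by_cases h4 : b R.2 = 0
      · simp [h4]
      have h5 : (x R.1 : ℤ) - y R.2 ≠ k := by
        intro h5
        exact h2 (by simp [S, h1, h3, h4, h5])
      simp [Pi.single_apply, h5]
  refine (Finset.sum_le_sum fun R _ => hle R).trans ?_
  have hc : S.card ≤ k.natAbs * m := by
    have : (Finset.range k.natAbs ×ˢ Finset.range m).card = k.natAbs * m := by simp
    rw [← this]
    apply Finset.card_le_card_of_injOn (fun R => (max (x R.1) (y R.2) % N, max (x R.1) (y R.2) / N))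
    · intro R hR
      have hR' : x R.1 / N ≠ y R.2 / N ∧ a R.1 ≠ 0 ∧ b R.2 ≠ 0 ∧ (x R.1 : ℤ) - y R.2 = k := by
        simpa [S] using hR
      obtain ⟨h1, -, -, h4⟩ := hR'
      have aux : ∀ u v : ℕ, u ≤ v → u / N ≠ v / N → v % N < v - u := by
        intro u v huv hne
        by_contra hcon
        push Not at hcon
        apply hne
        have h5 := Nat.div_add_mod v N
        have h6 : v % N < N := Nat.mod_lt _ hN
        have h7 : u = (v % N - (v - u)) + N * (v / N) := by omega
        rw [h7, Nat.add_mul_div_left _ _ hN, Nat.div_eq_of_lt (by omega), zero_add]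
      simp only [Finset.coe_product, Set.mem_prod, Finset.coe_range, Set.mem_Iio]
      rcases le_total (x R.1) (y R.2) with h | h
      · rw [max_eq_right h]
        refine ⟨?_, hy _⟩
        have := aux _ _ h h1
        omega
      · rw [max_eq_left h]
        refine ⟨?_, hx _⟩
        have := aux _ _ h (Ne.symm h1)
        omega
    · intro R hR R' hR' heq
      have hR1 : x R.1 / N ≠ y R.2 / N ∧ a R.1 ≠ 0 ∧ b R.2 ≠ 0 ∧ (x R.1 : ℤ) - y R.2 = k := by
        simpa [S] using hR
      have hR2 : x R'.1 / N ≠ y R'.2 / N ∧ a R'.1 ≠ 0 ∧ b R'.2 ≠ 0 ∧ (x R'.1 : ℤ) - y R'.2 = k := by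
        simpa [S] using hR'
      simp only [Prod.mk.injEq] at heq
      have h5 := Nat.div_add_mod (max (x R.1) (y R.2)) N
      have h6 := Nat.div_add_mod (max (x R'.1) (y R'.2)) N
      rw [heq.1, heq.2, h6] at h5
      have h7 := hR1.2.2.2
      have h8 := hR2.2.2.2
      apply Prod.ext
      · apply hxi hR1.2.1 hR2.2.1
        omega
      · apply hyi hR1.2.2.1 hR2.2.2.1
        omega
  simp only [Finset.univ_product_univ]
  rw [Finset.sum_ite_mem, Finset.univ_inter]
  simpa using (by exact_mod_cast hc : (S.card : ℝ) ≤ ((k.natAbs * m : ℕ) : ℝ))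

end fin

section sq

variable {α β : ℕ → Type} [∀ n, Fintype (α n)] [∀ n, DecidableEq (α n)]
  [∀ n, Fintype (β n)] [∀ n, DecidableEq (β n)]

lemma off_small (m : ℕ) (x : ∀ n, α n → ℕ) (y : ∀ n, β n → ℕ) (a : ∀ n, α n → ℂ)
    (b : ∀ n, β n → ℂ)
    (ha : ∀ n P, ‖a n P‖ ≤ 1)
    (hb : ∀ n Q, ‖b n Q‖ ≤ 1) (hx : ∀ n P, x n P / n < m) (hy : ∀ n Q, y n Q / n < m)
    (hxi : ∀ n, Set.InjOn (x n) {P | a n P ≠ 0}) (hyi : ∀ n, Set.InjOn (y n) {Q | b n Q ≠ 0})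
    {c : ℝ} (hc : 0 ≤ c) (hα : ∀ n, (Fintype.card (α n) : ℝ) ≤ c * n)
    (hβ : ∀ n, (Fintype.card (β n) : ℝ) ≤ c * n)
    {ψ : AddCircle T → ℂ} (hψ : Integrable ψ AddCircle.haarAddCircle) (ε : ℝ) (hε : 0 < ε) :
    ∀ᶠ n : ℕ in atTop, TN (offMat n (x n) (y n) (a n) (b n) ψ) (ε * n) := by
  let L : (AddCircle T → ℂ) → Prop := fun ψ => ∀ ε : ℝ, 0 < ε → ∀ᶠ n : ℕ in atTop,
    TN (offMat n (x n) (y n) (a n) (b n) ψ) (ε * n)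
  have hcongr : ∀ f g : AddCircle T → ℂ, f =ᵐ[AddCircle.haarAddCircle] g → L f → L g := by
    intro f g hfg hf ε hε
    filter_upwards [hf ε hε] with n hn
    have : offMat n (x n) (y n) (a n) (b n) g = offMat n (x n) (y n) (a n) (b n) f := by
      simp only [offMat, fourierCoeff_congr_ae hfg]
    rwa [this]
  have hadd : ∀ n, ∀ f g : AddCircle T → ℂ, Integrable f AddCircle.haarAddCircle →
      Integrable g AddCircle.haarAddCircle → offMat n (x n) (y n) (a n) (b n) (f + g) =
      offMat n (x n) (y n) (a n) (b n) f + offMat n (x n) (y n) (a n) (b n) g := by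
    intro n f g hf hg
    ext P Q
    simp only [offMat, fourierCoeff.add hf hg, Matrix.of_apply, Matrix.add_apply, Pi.add_apply]
    split_ifs
    · simp
    · ring
  have hspan : ∀ g ∈ Submodule.span ℂ (Set.range (@fourierLp T _ 1 _)), L g := by
    intro g hg
    induction hg using Submodule.span_induction with
    | mem g hg =>
      obtain ⟨k, rfl⟩ := hg
      refine hcongr (fourier k) _ (coeFn_fourierLp 1 k).symm ?_
      intro ε hε
      obtain ⟨n0, hn0⟩ := exists_nat_gt (((k.natAbs * m : ℕ) : ℝ) / ε)
      filter_upwards [eventually_ge_atTop n0, eventually_gt_atTop 0] with n hn hn1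
      refine (off_mono n m hn1 (x n) (y n) (a n) (b n) (ha n) (hb n) (hx n) (hy n) (hxi n)
        (hyi n) k).mono ?_
      rw [div_lt_iff₀ hε] at hn0
      have : (n0 : ℝ) ≤ n := by exact_mod_cast hn
      nlinarith
    | zero =>
      refine hcongr 0 _ (Lp.coeFn_zero _ _ _).symm ?_
      intro ε hε
      filter_upwards with n
      have : offMat n (x n) (y n) (a n) (b n) (0 : AddCircle T → ℂ) = 0 := by
        ext P Q
        simp [offMat, fourierCoeff]
      rw [this]
      exact TN.zero.mono (by positivity)
    | add f g _ _ h1 h2 =>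
      refine hcongr (⇑f + ⇑g) _ (Lp.coeFn_add _ _).symm ?_
      intro ε hε
      filter_upwards [h1 (ε/2) (by positivity), h2 (ε/2) (by positivity)] with n h1 h2
      rw [hadd n f g (L1.integrable_coeFn f) (L1.integrable_coeFn g)]
      exact (h1.add h2).mono (le_of_eq (by ring))
    | smul r f _ h1 =>
      refine hcongr (r • ⇑f) _ (Lp.coeFn_smul _ _).symm ?_
      intro ε hε
      filter_upwards [h1 (ε/(‖r‖ + 1)) (by positivity)] with n h1
      have : offMat n (x n) (y n) (a n) (b n) (r • ⇑f) = r • offMat n (x n) (y n) (a n) (b n) f := by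
        ext P Q
        simp only [offMat, fourierCoeff.const_smul, Matrix.of_apply, Matrix.smul_apply, smul_eq_mul]
        split_ifs
        · simp
        · ring
      rw [this]
      refine (h1.smul r).mono ?_
      have h3 : ‖r‖ * (ε / (‖r‖ + 1) * n) = (ε * n) * (‖r‖ / (‖r‖ + 1)) := by ring
      rw [h3]
      apply mul_le_of_le_one_right (by positivity)
      rw [div_le_one (by positivity)]
      linarith
  have hmem : hψ.toL1 ψ ∈ closure
      (Submodule.span ℂ (Set.range (@fourierLp T _ 1 _)) : Set (Lp ℂ 1 (@AddCircle.haarAddCircle T _))) := by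
    have := @span_fourierLp_closure_eq_top T _ 1 _ (by simp)
    rw [← Submodule.topologicalClosure_coe, this]
    trivial
  obtain ⟨g, hg, hd⟩ := Metric.mem_closure_iff.1 hmem (ε / (2 * ((m + 1) * (c + 1)))) (by positivity)
  have hae : ψ =ᵐ[AddCircle.haarAddCircle] (⇑g + ⇑(hψ.toL1 ψ - g)) := by
    filter_upwards [Integrable.coeFn_toL1 hψ, Lp.coeFn_sub (hψ.toL1 ψ) g] with t h1 h2
    rw [Pi.add_apply, h2, Pi.sub_apply, h1]
    ring
  rw [dist_eq_norm] at hd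
  rw [L1.norm_eq_integral_norm] at hd
  filter_upwards [hspan g hg (ε / 2) (by positivity)] with n hn
  have e : offMat n (x n) (y n) (a n) (b n) ψ =
      offMat n (x n) (y n) (a n) (b n) (⇑g + ⇑(hψ.toL1 ψ - g)) := by
    simp only [offMat, fourierCoeff_congr_ae hae]
  rw [e, hadd n _ _ (L1.integrable_coeFn g) (L1.integrable_coeFn _)]
  have h2 := off_TN n m (x n) (y n) (a n) (b n) (ha n) (hb n) (hx n)
    (L1.integrable_coeFn (hψ.toL1 ψ - g))
  refine (hn.add h2).mono ?_
  have h3 : √(Fintype.card (β n)) * √(Fintype.card (α n)) ≤ (c + 1) * n := by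
    have h4 : √(Fintype.card (β n)) * √(Fintype.card (α n)) ≤ √(c * n) * √(c * n) :=
      mul_le_mul (Real.sqrt_le_sqrt (hβ n)) (Real.sqrt_le_sqrt (hα n)) (Real.sqrt_nonneg _)
        (Real.sqrt_nonneg _)
    rw [Real.mul_self_sqrt (by positivity)] at h4
    exact h4.trans (mul_le_mul_of_nonneg_right (by linarith) (by positivity))
  calc _ ≤ ε / 2 * n + (m + 1) * (ε / (2 * ((m + 1) * (c + 1))) * ((c + 1) * n)) := by
        gcongr
    _ = ε * n := by field_simp; ring

end sq

end ToepPart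

section FinalPart

instance fact_two_pi_pos : Fact (0 < 2 * π) := ⟨by positivity⟩

lemma fCoeff_eq {s t : ℕ} (f : ℝ → Matrix (Fin s) (Fin t) ℂ) (k : ℤ) (a : Fin s) (b : Fin t) :
    fCoeff f k a b = fourierCoeff (AddCircle.liftIoc (2 * π) (-π) (fun θ => f θ a b)) k := by
  rw [fourierCoeff_liftIoc_eq, fourierCoeffOn_eq_integral]
  have h1 : -π + 2 * π = π := by ring
  have h2 : π - -π = 2 * π := by ring
  simp only [fCoeff, Matrix.of_apply, h1]
  rw [h2]
  have h3 : ∀ θ : ℝ, (fourier (-k) (θ : AddCircle (2 * π)) : ℂ) • f θ a b =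
      f θ a b * Complex.exp (-(Complex.I * (k : ℂ) * (θ : ℂ))) := by
    intro θ
    rw [fourier_coe_apply, smul_eq_mul, mul_comm]
    congr 2
    have : (π : ℂ) ≠ 0 := by exact_mod_cast Real.pi_ne_zero
    push_cast
    field_simp
  have h4 : ∀ T : ℝ, T = 2 * π → ∫ x in (-π)..π, (fourier (-k) (x : AddCircle T) : ℂ) • f x a b =
      ∫ θ in (-π)..π, f θ a b * Complex.exp (-(Complex.I * (k : ℂ) * (θ : ℂ))) := by
    rintro T rfl
    simp only [h3]
  rw [h4 _ (by ring), Complex.real_smul]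
  simp

lemma lift_integrable {f : ℝ → ℂ} (hf : IntervalIntegrable f volume (-π) π) :
    Integrable (AddCircle.liftIoc (2 * π) (-π) f) AddCircle.haarAddCircle := by
  rw [← memLp_one_iff_integrable]
  apply MemLp.haarAddCircle
  apply MemLp.memLp_liftIoc
  rw [memLp_one_iff_integrable]
  have h1 : -π + 2 * π = π := by ring
  rw [h1]
  exact (intervalIntegrable_iff_integrableOn_Ioc_of_le (by linarith [Real.pi_pos])).1 hf

lemma diff_entry (ν s t : ℕ) (mj : Fin ν → ℕ) (N : ℕ)
    (f : Fin ν → Fin ν → ℝ → Matrix (Fin s) (Fin t) ℂ)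
    (P : (i : Fin ν) × (Fin (mj i * N) × Fin s)) (Q : (j : Fin ν) × (Fin (mj j * N) × Fin t)) :
    (blockMat ν s t f (fun j => mj j * N) - blockMatHat ν s t f mj N) P Q =
      if (P.2.1 : ℕ) / N = (Q.2.1 : ℕ) / N then 0 else
        fCoeff (f P.1 Q.1) (((P.2.1 : ℕ) : ℤ) - ((Q.2.1 : ℕ) : ℤ)) P.2.2 Q.2.2 := by
  obtain ⟨i, p, a⟩ := P
  obtain ⟨j, q, b⟩ := Q
  simp only [Matrix.sub_apply, blockMat, blockMatHat, Matrix.of_apply]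
  by_cases h : (p : ℕ) / N = (q : ℕ) / N
  · have hN : 0 < N := by
      rcases Nat.eq_zero_or_pos N with h0 | h0
      · subst h0; exact absurd p.2 (by simp)
      · exact h0
    have hp : (p : ℕ) / N < mj i := (Nat.div_lt_iff_lt_mul hN).2 p.2
    have hq : (q : ℕ) / N < mj j := (Nat.div_lt_iff_lt_mul hN).2 q.2
    have hp' : (p : ℕ) < min (mj i) (mj j) * N :=
      (Nat.div_lt_iff_lt_mul hN).1 (lt_min hp (h ▸ hq))
    have hq' : (q : ℕ) < min (mj i) (mj j) * N :=
      (Nat.div_lt_iff_lt_mul hN).1 (lt_min (h ▸ hp) hq)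
    rw [if_pos ⟨hp', hq', h⟩, if_pos h]
    have h5 := Nat.div_add_mod (p : ℕ) N
    have h6 := Nat.div_add_mod (q : ℕ) N
    rw [h] at h5
    have h7 : ((((p : ℕ) % N : ℕ) : ℤ) - (((q : ℕ) % N : ℕ) : ℤ)) = ((p : ℕ) : ℤ) - ((q : ℕ) : ℤ) := by
      omega
    rw [h7, sub_self]
  · rw [if_neg (fun h' => h h'.2.2), if_neg h, sub_zero]

lemma diff_small (ν s t m : ℕ) 
    (mj : Fin ν → ℕ) (hmsum : ∑ j, mj j = m)
    (f : Fin ν → Fin ν → ℝ → Matrix (Fin s) (Fin t) ℂ)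
    (hf : ∀ i j a b, IntervalIntegrable (fun θ => f i j θ a b) volume (-π) π) (ε : ℝ) (hε : 0 < ε) :
    ∀ᶠ N : ℕ in atTop, TN (blockMat ν s t f (fun j => mj j * N) - blockMatHat ν s t f mj N)
      (ε * N) := by
  let x : ∀ N, ((i : Fin ν) × (Fin (mj i * N) × Fin s)) → ℕ := fun N P => P.2.1
  let y : ∀ N, ((i : Fin ν) × (Fin (mj i * N) × Fin t)) → ℕ := fun N P => P.2.1
  let a : Fin ν × Fin s → ∀ N, ((i : Fin ν) × (Fin (mj i * N) × Fin s)) → ℂ :=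
    fun σ N P => if P.1 = σ.1 ∧ P.2.2 = σ.2 then 1 else 0
  let b : Fin ν × Fin t → ∀ N, ((i : Fin ν) × (Fin (mj i * N) × Fin t)) → ℂ :=
    fun σ N P => if P.1 = σ.1 ∧ P.2.2 = σ.2 then 1 else 0
  let ψ : (Fin ν × Fin s) × (Fin ν × Fin t) → AddCircle (2 * π) → ℂ := fun σ =>
    AddCircle.liftIoc (2 * π) (-π) (fun θ => f σ.1.1 σ.2.1 θ σ.1.2 σ.2.2)
  have e : ∀ N, blockMat ν s t f (fun j => mj j * N) - blockMatHat ν s t f mj N =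
      ∑ σ : (Fin ν × Fin s) × (Fin ν × Fin t), offMat N (x N) (y N) (a σ.1 N) (b σ.2 N) (ψ σ) := by
    intro N
    ext P Q
    rw [diff_entry, Matrix.sum_apply, Finset.sum_eq_single ((P.1, P.2.2), (Q.1, Q.2.2))]
    · simp only [offMat, Matrix.of_apply, x, y, a, b, ψ, fCoeff_eq]
      simp
    · rintro ⟨⟨i, α⟩, ⟨j, β⟩⟩ _ hne
      simp only [offMat, Matrix.of_apply, a, b]
      by_cases h1 : P.1 = i ∧ P.2.2 = α
      · by_cases h2 : Q.1 = j ∧ Q.2.2 = β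
        · exact absurd (Prod.ext (Prod.ext h1.1.symm h1.2.symm) (Prod.ext h2.1.symm h2.2.symm)) hne
        · simp [h2]
      · simp [h1]
    · simp
  have hmle : ∀ i, mj i ≤ m := fun i => hmsum ▸ Finset.single_le_sum (fun _ _ => Nat.zero_le _)
    (Finset.mem_univ i)
  have hcard : ∀ r N : ℕ, Fintype.card ((i : Fin ν) × (Fin (mj i * N) × Fin r)) = m * r * N := by
    intro r N
    simp only [Fintype.card_sigma, Fintype.card_prod, Fintype.card_fin]
    rw [← Finset.sum_mul, ← Finset.sum_mul, hmsum]; ring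
  have key : ∀ σ : (Fin ν × Fin s) × (Fin ν × Fin t), ∀ ε : ℝ, 0 < ε → ∀ᶠ N : ℕ in atTop,
      TN (offMat N (x N) (y N) (a σ.1 N) (b σ.2 N) (ψ σ)) (ε * N) := by
    intro σ ε hε
    refine off_small m x y (a σ.1) (b σ.2) ?_ ?_ ?_ ?_ ?_ ?_ (c := m * (s + t)) (by positivity)
      ?_ ?_ (lift_integrable (hf _ _ _ _)) ε hε
    · intro n P; simp only [a]; split_ifs <;> simp
    · intro n P; simp only [b]; split_ifs <;> simp
    · intro n P
      exact (Nat.div_lt_of_lt_mul (by rw [mul_comm]; exact P.2.1.2)).trans_le (hmle P.1)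
    · intro n P
      exact (Nat.div_lt_of_lt_mul (by rw [mul_comm]; exact P.2.1.2)).trans_le (hmle P.1)
    · rintro n ⟨i, p, α⟩ h ⟨i', p', α'⟩ h' hpp
      simp only [a, Set.mem_setOf_eq, ne_eq, ite_eq_right_iff, one_ne_zero, imp_false,
        not_not] at h h'
      obtain ⟨h1, h2⟩ := h
      obtain ⟨h1', h2'⟩ := h'
      subst h1 h2 h1' h2'
      have : p = p' := Fin.ext hpp
      rw [this]
    · rintro n ⟨i, p, α⟩ h ⟨i', p', α'⟩ h' hpp
      simp only [b, Set.mem_setOf_eq, ne_eq, ite_eq_right_iff, one_ne_zero, imp_false,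
        not_not] at h h'
      obtain ⟨h1, h2⟩ := h
      obtain ⟨h1', h2'⟩ := h'
      subst h1 h2 h1' h2'
      have : p = p' := Fin.ext hpp
      rw [this]
    · intro n
      rw [hcard]; push_cast
      gcongr
      simp
    · intro n
      rw [hcard]; push_cast
      gcongr
      simp
  let K : ℝ := Fintype.card ((Fin ν × Fin s) × (Fin ν × Fin t))
  have hK : 0 ≤ K := Nat.cast_nonneg _
  have hall := Filter.eventually_all.2 fun σ => key σ (ε / (K + 1)) (by positivity)
  filter_upwards [hall] with N hN
  rw [e]
  refine (TN.sum Finset.univ (fun σ _ => hN σ)).mono ?_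
  rw [Finset.sum_const, nsmul_eq_mul, Finset.card_univ]
  change K * _ ≤ _
  have h3 : K * (ε / (K + 1) * N) = (ε * N) * (K / (K + 1)) := by ring
  rw [h3]
  apply mul_le_of_le_one_right (by positivity)
  rw [div_le_one (by positivity)]
  linarith

lemma avg_iff (d : ℕ → ℕ) (hd : ∀ n, n ≤ d n) (U V : ℕ → ℂ) (z : ℂ)
    (h : ∀ ε : ℝ, 0 < ε → ∀ᶠ n : ℕ in atTop, ‖U n - V n‖ ≤ ε * n) :
    Tendsto (fun n => ((d n : ℕ) : ℂ)⁻¹ * U n) atTop (𝓝 z) ↔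
      Tendsto (fun n => ((d n : ℕ) : ℂ)⁻¹ * V n) atTop (𝓝 z) := by
  apply tendsto_iff_of_dist
  rw [Metric.tendsto_atTop']
  intro ε hε
  have := (h (ε / 2) (by positivity)).and (eventually_gt_atTop 0)
  obtain ⟨n0, hn0⟩ := eventually_atTop.1 this
  refine ⟨n0, fun n hn => ?_⟩
  obtain ⟨h1, h2⟩ := hn0 n hn.le
  rw [dist_zero_right, Real.norm_of_nonneg dist_nonneg, dist_eq_norm, ← mul_sub, norm_mul, norm_inv,
    Complex.norm_natCast]
  have h3 : (n : ℝ) ≤ d n := by exact_mod_cast hd n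
  have h4 : (0 : ℝ) < n := by exact_mod_cast h2
  rw [inv_mul_lt_iff₀ (by linarith)]
  nlinarith

lemma sqrt_comp_support {F : ℝ → ℂ} (hF : Continuous F) (hF' : HasCompactSupport F) :
    Continuous (fun x => F √|x|) ∧ HasCompactSupport (fun x => F √|x|) := by
  refine ⟨by fun_prop, ?_⟩
  obtain ⟨R, hR⟩ := hF'.isCompact.isBounded.subset_closedBall (0 : ℝ)
  apply HasCompactSupport.intro (isCompact_closedBall (0 : ℝ) (R ^ 2))
  intro x hx
  apply image_eq_zero_of_notMem_tsupport
  intro hmem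
  have := hR hmem
  simp only [Metric.mem_closedBall, dist_zero_right, Real.norm_eq_abs, abs_of_nonneg (Real.sqrt_nonneg _)] at this hx
  apply hx
  have h1 := Real.sq_sqrt (abs_nonneg x)
  have h0 := Real.sqrt_nonneg |x|
  nlinarith

lemma card_idx {ν m : ℕ} (mj : Fin ν → ℕ) (hmsum : ∑ j, mj j = m) (r N : ℕ) :
    Fintype.card ((i : Fin ν) × (Fin (mj i * N) × Fin r)) = m * r * N := by
  simp only [Fintype.card_sigma, Fintype.card_prod, Fintype.card_fin]
  rw [← Finset.sum_mul, ← Finset.sum_mul, hmsum]; ring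

lemma le_card_idx {ν m : ℕ} (hm : 0 < m) (mj : Fin ν → ℕ) (hmsum : ∑ j, mj j = m) (r N : ℕ)
    (hr : 0 < r) : N ≤ Fintype.card ((i : Fin ν) × (Fin (mj i * N) × Fin r)) := by
  rw [card_idx mj hmsum]
  exact Nat.le_mul_of_pos_left N (Nat.mul_pos hm hr)

open scoped ComplexOrder in
/-- singular value part -/
lemma sv_part {ι κ : ℕ → Type} [∀ n, Fintype (ι n)] [∀ n, Fintype (κ n)] [∀ n, DecidableEq (ι n)]
    [∀ n, DecidableEq (κ n)]
    (A B : ∀ n, Matrix (ι n) (κ n) ℂ) {c : ℝ} (hc : 0 ≤ c)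
    (hcard : ∀ n, (Fintype.card (ι n) : ℝ) ≤ c * n)
    (h1 : ∀ n, n ≤ Fintype.card (ι n)) (h2 : ∀ n, n ≤ Fintype.card (κ n))
    (h : ∀ ε : ℝ, 0 < ε → ∀ᶠ n : ℕ in atTop, TN (A n - B n) (ε * n))
    {F : ℝ → ℂ} (hF : Continuous F) (hF' : HasCompactSupport F) (z : ℂ) :
    Tendsto (fun n => ((min (Fintype.card (ι n)) (Fintype.card (κ n)) : ℕ) : ℂ)⁻¹ * svSum F (A n))
      atTop (𝓝 z) ↔
    Tendsto (fun n => ((min (Fintype.card (ι n)) (Fintype.card (κ n)) : ℕ) : ℂ)⁻¹ * svSum F (B n))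
      atTop (𝓝 z) := by
  apply avg_iff (fun n => min (Fintype.card (ι n)) (Fintype.card (κ n))) (fun n => le_min (h1 n) (h2 n))
  intro ε hε
  obtain ⟨hG, hG'⟩ := sqrt_comp_support hF hF'
  have hr : Good (fun n => isHermitian_mul_conjTranspose_self (A n))
      (fun n => isHermitian_mul_conjTranspose_self (B n)) rz := by
    intro ε hε
    filter_upwards [h (ε / 2) (by positivity)] with n hn
    exact (resolvent_TN_sv _ _ (by positivity) hn).mono (le_of_eq (by ring))
  have hab : ∀ n (M : Matrix (ι n) (κ n) ℂ) i,
      |(isHermitian_mul_conjTranspose_self M).eigenvalues i| =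
        (isHermitian_mul_conjTranspose_self M).eigenvalues i := fun n M i =>
    abs_of_nonneg ((Matrix.posSemidef_self_mul_conjTranspose M).eigenvalues_nonneg i)
  filter_upwards [good_compact _ _ hr hc hcard hG hG' ε hε] with n hn
  simp only [hab] at hn
  simpa only [svSum, sub_sub_sub_cancel_right] using hn

/-- eigenvalue part -/
lemma eig_part {ι : ℕ → Type} [∀ n, Fintype (ι n)] [∀ n, DecidableEq (ι n)]
    (A B : ∀ n, Matrix (ι n) (ι n) ℂ) (hA : ∀ n, (A n).IsHermitian) (hB : ∀ n, (B n).IsHermitian)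
    {c : ℝ} (hc : 0 ≤ c)
    (hcard : ∀ n, (Fintype.card (ι n) : ℝ) ≤ c * n)
    (h1 : ∀ n, n ≤ Fintype.card (ι n))
    (h : ∀ ε : ℝ, 0 < ε → ∀ᶠ n : ℕ in atTop, TN (A n - B n) (ε * n))
    {F : ℂ → ℂ} (hF : Continuous F) (hF' : HasCompactSupport F) (z : ℂ) :
    Tendsto (fun n => ((Fintype.card (ι n) : ℕ) : ℂ)⁻¹ * eigSum F (A n)) atTop (𝓝 z) ↔
    Tendsto (fun n => ((Fintype.card (ι n) : ℕ) : ℂ)⁻¹ * eigSum F (B n)) atTop (𝓝 z) := by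
  apply avg_iff (fun n => Fintype.card (ι n)) h1
  intro ε hε
  have hr : Good hA hB rz := by
    intro ε hε
    filter_upwards [h ε hε] with n hn
    exact resolvent_TN_herm _ _ (by positivity) hn
  have hG : Continuous (fun x : ℝ => F x) := hF.comp Complex.continuous_ofReal
  have hG' : HasCompactSupport (fun x : ℝ => F x) :=
    hF'.comp_isClosedEmbedding Complex.isometry_ofReal.isClosedEmbedding
  have he : ∀ n (M : Matrix (ι n) (ι n) ℂ) (hM : M.IsHermitian),
      eigSum F M = ∑ i, F (hM.eigenvalues i : ℂ) := by
    intro n M hM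
    rw [eigSum, hM.roots_charpoly_eq_eigenvalues, Multiset.map_map]
    rfl
  filter_upwards [good_compact _ _ hr hc hcard hG hG' ε hε] with n hn
  rw [he n _ (hA n), he n _ (hB n)]
  exact hn

end FinalPart


end HelperLemmas

/-- for block sizes exactly `n_j = m_j n(m)` (with `n` divisible by
`m`, `n(m) = n/m`, reparametrized by `N = n(m)`), the sequences `{A_n}_n` and
`{Â_n}_n` have the same singular value symbols, and — when all the matrices involved
are Hermitian — the same eigenvalue symbols. -/
theorem hat_equivalence
    (ν s t m : ℕ) (hν : 2 ≤ ν) (hs : 0 < s) (ht : 0 < t) (hm : 0 < m)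
    (mj : Fin ν → ℕ) (hmj : ∀ j, 0 < mj j) (hmsum : ∑ j, mj j = m)
    (f : Fin ν → Fin ν → ℝ → Matrix (Fin s) (Fin t) ℂ)
    (hf : ∀ i j a b, IntervalIntegrable (fun θ => f i j θ a b) volume (-π) π) :
    (∀ (l s' t' : ℕ) (Ω : Set (Fin l → ℝ)), MeasurableSet Ω →
      0 < volume Ω → volume Ω < ⊤ →
      ∀ G : (Fin l → ℝ) → Matrix (Fin s') (Fin t') ℂ,
        (∀ a b, Measurable fun θ => G θ a b) →
        (DistributedSV Ω G (fun N => blockMat ν s t f (fun j => mj j * N)) ↔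
          DistributedSV Ω G (fun N => blockMatHat ν s t f mj N))) ∧
    (∀ hst : s = t,
      (∀ N, ((blockMat ν s t f (fun j => mj j * N)).submatrix id
        (sigCast ν s t (fun j => mj j * N) hst)).IsHermitian) →
      (∀ N, ((blockMatHat ν s t f mj N).submatrix id
        (sigCast ν s t (fun j => mj j * N) hst)).IsHermitian) →
      ∀ (l s' : ℕ) (Ω : Set (Fin l → ℝ)), MeasurableSet Ω →
        0 < volume Ω → volume Ω < ⊤ →
        ∀ G : (Fin l → ℝ) → Matrix (Fin s') (Fin s') ℂ,
          (∀ a b, Measurable fun θ => G θ a b) →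
          (DistributedEig Ω G
              (fun N => (blockMat ν s t f (fun j => mj j * N)).submatrix id
                (sigCast ν s t (fun j => mj j * N) hst)) ↔
            DistributedEig Ω G
              (fun N => (blockMatHat ν s t f mj N).submatrix id
                (sigCast ν s t (fun j => mj j * N) hst)))) := by
  have hc : ∀ N, (Fintype.card ((i : Fin ν) × (Fin (mj i * N) × Fin s)) : ℝ) ≤ (m * s : ℝ) * N := by
    intro N
    rw [card_idx mj hmsum]
    push_cast
    exact le_rfl
  have h1 : ∀ N, N ≤ Fintype.card ((i : Fin ν) × (Fin (mj i * N) × Fin s)) := fun N =>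
    le_card_idx hm mj hmsum s N hs
  have h2 : ∀ N, N ≤ Fintype.card ((i : Fin ν) × (Fin (mj i * N) × Fin t)) := fun N =>
    le_card_idx hm mj hmsum t N ht
  have hd := diff_small ν s t m mj hmsum f hf
  constructor
  · intro l s' t' Ω _ _ _ G _
    refine forall_congr' fun F => forall_congr' fun hF => forall_congr' fun hF' => ?_
    exact sv_part _ _ (by positivity) hc h1 h2 hd hF hF' _
  · intro hst hA hB l s' Ω _ _ _ G _
    subst hst
    refine forall_congr' fun F => forall_congr' fun hF => forall_congr' fun hF' => ?_
    exact eig_part _ _ hA hB (by positivity) hc h1 hd hF hF' _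

end
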